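/- The map Δ satisfies: (i) Δ is continuous on (0, +∞)²; (ii) Δ is monotone, in the sense that if Δ(t₀, x₀) = (0, p₀) and Δ(t₀, x₀′) = (0, p₀′) with 0 < x₀ < x₀′, then p₀ < p₀′; (iii) for every x ∈ (0, +∞), Δ(t, x) → (x, 2) as t → 0⁺. -/

import Mathlib

open Real Set Filter MeasureTheory
open scoped Topology

/-- The potential `g` from the Hamiltonian `H(x,p) = p²/2 + g(x)`. -/
noncomputable def g (x : ℝ) : ℝ := if |x| ≤ 1 then 1 - (1 - x ^ 2) ^ 4 else 1

/-- The derivative of `g`. -/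
noncomputable def g' (x : ℝ) : ℝ := if |x| ≤ 1 then 8 * x * (1 - x ^ 2) ^ 3 else 0

/-- `(q, p)` is a (global) solution of the Hamiltonian system (HS): `q̇ = p`, `ṗ = -g'(q)`. -/
def IsHSSol (q p : ℝ → ℝ) : Prop :=
  (∀ t : ℝ, HasDerivAt q (p t) t) ∧ (∀ t : ℝ, HasDerivAt p (-(g' (q t))) t)

/-- `F` is the flow of (HS): `F t q₀ p₀ = (q t, p t)` for the solution with data `(q₀, p₀)`. -/
def IsHSFlow (F : ℝ → ℝ → ℝ → ℝ × ℝ) : Prop :=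
  ∀ q₀ p₀ : ℝ,
    IsHSSol (fun t => (F t q₀ p₀).1) (fun t => (F t q₀ p₀).2) ∧ F 0 q₀ p₀ = (q₀, p₀)

/-- The set `([0,∞) × {2}) ∪ ({0} × (0,2])`, codomain of the map `Δ`. -/
def Dset : Set (ℝ × ℝ) := (Ici (0:ℝ) ×ˢ ({2} : Set ℝ)) ∪ ({(0:ℝ)} ×ˢ Ioc (0:ℝ) 2)

/-- `T` is the smallest positive period of `q`. -/
def IsSmallestPeriod (q : ℝ → ℝ) (T : ℝ) : Prop :=
  0 < T ∧ Function.Periodic q T ∧ ∀ T' : ℝ, 0 < T' → Function.Periodic q T' → T ≤ T'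

/-- `T` is the period map `𝒯`, assigning to `p₀ ∈ (0, √2)` the smallest positive period of
the `q`-component of the solution of (HS) with initial datum `(0, p₀)`. -/
def IsPeriodMap (F : ℝ → ℝ → ℝ → ℝ × ℝ) (T : ℝ → ℝ) : Prop :=
  ∀ p₀ ∈ Ioo (0:ℝ) (Real.sqrt 2), IsSmallestPeriod (fun t => (F t 0 p₀).1) (T p₀)

/-- `Δ` associates to `(t,x)` the datum in `Dset` whose orbit stays positive on `(0,t)`
and reaches `x` at time `t`. -/
def IsDeltaMap (F : ℝ → ℝ → ℝ → ℝ × ℝ) (Δ : ℝ → ℝ → ℝ × ℝ) : Prop :=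
  ∀ t x : ℝ, 0 < t → 0 < x →
    Δ t x ∈ Dset ∧ (F t (Δ t x).1 (Δ t x).2).1 = x ∧
      ∀ s ∈ Ioo (0:ℝ) t, 0 < (F s (Δ t x).1 (Δ t x).2).1

/-- The solution `u` of the conservation law built from the flow `F` and the map `Δ`
(extended by `0` at `x = 0`). -/
noncomputable def usol (F : ℝ → ℝ → ℝ → ℝ × ℝ) (Δ : ℝ → ℝ → ℝ × ℝ) (t x : ℝ) : ℝ :=
  if 0 < x then (F t (Δ t x).1 (Δ t x).2).2
  else if x < 0 then -(F t (Δ t (-x)).1 (Δ t (-x)).2).2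
  else 0

/-!
Write a datum of `Dset` as `(max θ 0, 2 + min θ 0)` with `θ > -2`. Two orbits with parameters
`θ₁ < θ₂` keep their order for as long as the lower one is positive:

* if `θ₂ ≤ 0`, both start at the origin with distinct momenta, and since `g' x / x` is
  nonincreasing, Sturm's Wronskian argument shows that the ratio of the positions does not decrease
  while they are ordered, so it cannot return to `1`;
* if `0 < θ₂` and `θ₁ < 1`, the upper orbit has the larger energy and a positive momentum, so it
  would be the faster one wherever the two meet;
* if `1 ≤ θ₁`, both move freely with velocity `2`.

The parameter of the orbit through `(t, x)` therefore inverts an ordered family of continuous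
curves, which makes it monotone in `x` and continuous, down to time `0`, where the curve with
parameter `x > 0` starts at `x`.
-/

section RealAnalysis

theorem exists_first_zero {f : ℝ → ℝ} {a b : ℝ} (hf : ContinuousOn f (Icc a b)) (hab : a < b)
    (hpos : ∀ᶠ s in 𝓝[>] a, 0 < f s) (hb : f b ≤ 0) :
    ∃ c ∈ Ioc a b, f c = 0 ∧ ∀ s ∈ Ioo a c, 0 < f s := by
  obtain ⟨ε, hε, hεpos⟩ := mem_nhdsGT_iff_exists_Ioc_subset.1 hpos
  have hεb : ε < b := lt_of_not_ge fun hle => hb.not_gt (hεpos ⟨hab, hle⟩)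
  have hf' : ContinuousOn f (Icc ε b) := hf.mono (Icc_subset_Icc_left (le_of_lt hε))
  have hcompact : IsCompact (Icc ε b ∩ f ⁻¹' Iic 0) :=
    isCompact_Icc.of_isClosed_subset (hf'.preimage_isClosed_of_isClosed isClosed_Icc isClosed_Iic)
      inter_subset_left
  obtain ⟨c, ⟨⟨hεc, hcb⟩, hfc⟩, hleast⟩ := hcompact.exists_isLeast ⟨b, ⟨hεb.le, le_rfl⟩, hb⟩
  have hpos_before : ∀ s ∈ Ioo a c, 0 < f s := fun s hs => by
    rcases le_or_gt s ε with hsε | hεs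
    · exact hεpos ⟨hs.1, hsε⟩
    · by_contra hfs
      exact hs.2.not_ge (hleast ⟨⟨hεs.le, hs.2.le.trans hcb⟩, not_lt.1 hfs⟩)
  have hac : a < c := lt_of_lt_of_le hε hεc
  have hleft : Tendsto f (𝓝[Ioo a c] c) (𝓝 (f c)) :=
    (hf c ⟨hac.le, hcb⟩).mono fun s hs => ⟨hs.1.le, hs.2.le.trans hcb⟩
  have : (𝓝[Ioo a c] c).NeBot := right_nhdsWithin_Ioo_neBot hac
  have hfc' : 0 ≤ f c := ge_of_tendsto hleft <|
    eventually_mem_nhdsWithin.mono fun s hs => (hpos_before s hs).le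
  exact ⟨c, ⟨hac, hcb⟩, le_antisymm hfc hfc', hpos_before⟩

theorem eventually_nhdsGT_pos_of_hasDerivAt {f : ℝ → ℝ} {f' a : ℝ} (hf : HasDerivAt f f' a)
    (ha : f a = 0) (hf' : 0 < f') : ∀ᶠ s in 𝓝[>] a, 0 < f s := by
  have hsign := eventually_nhdsWithin_sign_eq_of_deriv_pos (hf.deriv.symm ▸ hf') ha
  filter_upwards [hsign.filter_mono nhdsWithin_le_nhds, self_mem_nhdsWithin] with s hs (has : a < s)
  rwa [sign_pos (sub_pos.2 has), sign_eq_one_iff] at hs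

theorem lt_of_hasDerivAt_lt_of_eq {f f' B B' : ℝ → ℝ} {a b : ℝ} (hf : ∀ x, HasDerivAt f (f' x) x)
    (hB : ∀ x, HasDerivAt B (B' x) x) (hab : a ≤ b) (ha : f a < B a)
    (hlt : ∀ x ∈ Ioc a b, f x = B x → f' x < B' x) : f b < B b := by
  by_contra! hb
  -- After time reversal `B` starts below `f` and cannot cross it.
  have hrev : ∀ {h h' : ℝ → ℝ}, (∀ x, HasDerivAt h (h' x) x) →
      ∀ x, HasDerivAt (fun s => h (-s)) (-h' (-x)) x := fun hh x => by
    simpa [Function.comp_def] using (hh (-x)).comp x (hasDerivAt_neg x)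
  have hle := image_le_of_deriv_right_lt_deriv_boundary (a := -b) (b := -a)
    (fun x _ => (hrev hB x).continuousAt.continuousWithinAt)
    (fun x _ => (hrev hB x).hasDerivWithinAt) (by simpa using hb) (hrev hf)
    (fun x hx heq => neg_lt_neg (hlt (-x) ⟨by linarith [hx.2], by linarith [hx.1]⟩ heq.symm))
    (right_mem_Icc.2 (neg_le_neg hab))
  simp only [neg_neg] at hle
  exact hle.not_gt ha

theorem hasDerivAt_max_zero_pow (n : ℕ) (y : ℝ) :
    HasDerivAt (fun z : ℝ => max z 0 ^ (n + 2)) ((n + 2 : ℕ) * max y 0 ^ (n + 1)) y := by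
  have hne : ∀ y : ℝ, y ≠ 0 →
      HasDerivAt (fun z : ℝ => max z 0 ^ (n + 2)) ((n + 2 : ℕ) * max y 0 ^ (n + 1)) y := by
    intro y hy
    rcases hy.lt_or_gt with hneg | hpos
    · rw [max_eq_right hneg.le, zero_pow n.succ_ne_zero, mul_zero]
      refine (hasDerivAt_const y 0).congr_of_eventuallyEq ?_
      filter_upwards [Iio_mem_nhds hneg] with z hz
      rw [max_eq_right (le_of_lt hz), zero_pow (Nat.succ_ne_zero _)]
    · rw [max_eq_left hpos.le]
      refine (hasDerivAt_pow (n + 2) y).congr_of_eventuallyEq ?_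
      filter_upwards [Ioi_mem_nhds hpos] with z hz
      rw [max_eq_left (le_of_lt hz)]
  rcases eq_or_ne y 0 with rfl | hy
  · exact hasDerivAt_of_hasDerivAt_of_ne (g := fun y => (n + 2 : ℕ) * max y 0 ^ (n + 1)) hne
      (by fun_prop) (by fun_prop)
  · exact hne y hy

end RealAnalysis

section OrderedCurves

/-- Positivity of a curve over the time interval `(0, t)` and at the end time `t`; for `t = 0` only
the end time counts. -/
def PositiveUpTo (q : ℝ → ℝ) (t : ℝ) : Prop :=
  (∀ s ∈ Ioo 0 t, 0 < q s) ∧ 0 < q t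

theorem PositiveUpTo.of_mem_Ioo {q : ℝ → ℝ} {s t : ℝ} (h : PositiveUpTo q t) (hs : s ∈ Ioo 0 t) :
    PositiveUpTo q s :=
  ⟨fun r hr => h.1 r ⟨hr.1, hr.2.trans hs.2⟩, h.1 s hs⟩

theorem PositiveUpTo.eventually_nhds {q : ℝ → ℝ} {t : ℝ} (hq : Continuous q)
    (h : PositiveUpTo q t) : ∀ᶠ s in 𝓝 t, PositiveUpTo q s := by
  have hpos : ∀ᶠ s in 𝓝 t, 0 < q s := hq.continuousAt.eventually_const_lt h.2
  obtain ⟨u, htu, hu⟩ := exists_Ico_subset_of_mem_nhds hpos ⟨t + 1, lt_add_one t⟩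
  filter_upwards [hpos, Iio_mem_nhds htu] with s hs hsu
  refine ⟨fun r hr => ?_, hs⟩
  rcases lt_or_ge r t with hrt | htr
  · exact h.1 r ⟨hr.1, hrt⟩
  · exact hu ⟨htr, hr.2.trans hsu⟩

variable {ι : Type*} [LinearOrder ι] {Φ : ι → ℝ → ℝ}

/-- A family of curves, indexed by a linear order, in which a curve stays strictly below all the
later ones for as long as it is positive. -/
def OrderedWhilePositive (Φ : ι → ℝ → ℝ) : Prop :=
  ∀ ⦃i j : ι⦄ ⦃t : ℝ⦄, i < j → 0 ≤ t → PositiveUpTo (Φ i) t → Φ i t < Φ j t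

namespace OrderedWhilePositive

section Order

variable (hΦ : OrderedWhilePositive Φ) {i j : ι} {t : ℝ}
include hΦ

theorem lt_of_apply_lt (ht : 0 ≤ t) (hj : PositiveUpTo (Φ j) t) (hlt : Φ i t < Φ j t) : i < j := by
  by_contra! hji
  rcases hji.eq_or_lt with rfl | hji
  · exact hlt.false
  · exact hlt.asymm (hΦ hji ht hj)

theorem positiveUpTo_of_lt (hij : i < j) (ht : 0 ≤ t) (hi : PositiveUpTo (Φ i) t) :
    PositiveUpTo (Φ j) t :=
  ⟨fun s hs => (hi.1 s hs).trans (hΦ hij hs.1.le (hi.of_mem_Ioo hs)),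
    hi.2.trans (hΦ hij ht hi)⟩

end Order

section Param

variable {α : Type*} {l : Filter α} {θ : α → ι} {T : α → ℝ} {i₀ : ι} {t₀ : ℝ}
  (hΦ : OrderedWhilePositive Φ) (hcont : ∀ i, Continuous (Φ i)) (ht₀ : 0 ≤ t₀)
  (hpos₀ : PositiveUpTo (Φ i₀) t₀) (hT : Tendsto T l (𝓝 t₀))
  (hΦT : Tendsto (fun a => Φ (θ a) (T a)) l (𝓝 (Φ i₀ t₀))) (hT₀ : ∀ᶠ a in l, 0 ≤ T a)
include hΦ hcont ht₀ hpos₀ hT hΦT hT₀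

theorem eventually_lt_param (hpos : ∀ᶠ a in l, PositiveUpTo (Φ (θ a)) (T a)) {i : ι} (hi : i < i₀) :
    ∀ᶠ a in l, i < θ a := by
  by_cases hneg : ∃ s ∈ Ioo 0 t₀, Φ i s ≤ 0
  · obtain ⟨s, ⟨hs, hst₀⟩, hΦs⟩ := hneg
    filter_upwards [hpos, hT.eventually_const_lt hst₀] with a ha hsT
    exact hΦ.lt_of_apply_lt hs.le (ha.of_mem_Ioo ⟨hs, hsT⟩) (hΦs.trans_lt (ha.1 s ⟨hs, hsT⟩))
  · push Not at hneg
    have hlt : Φ i t₀ < Φ i₀ t₀ := by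
      rcases le_or_gt (Φ i t₀) 0 with hle | hgt
      · exact hle.trans_lt hpos₀.2
      · exact hΦ hi ht₀ ⟨hneg, hgt⟩
    have hΦiT : Tendsto (fun a => Φ i (T a)) l (𝓝 (Φ i t₀)) := ((hcont i).tendsto t₀).comp hT
    filter_upwards [hpos, hT₀, hΦiT.eventually_lt hΦT hlt] with a ha hTa hlta
    exact hΦ.lt_of_apply_lt hTa ha hlta

theorem eventually_param_lt {j : ι} (hj : i₀ < j) : ∀ᶠ a in l, θ a < j := by
  have hposj : ∀ᶠ a in l, PositiveUpTo (Φ j) (T a) :=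
    hT.eventually ((hΦ.positiveUpTo_of_lt hj ht₀ hpos₀).eventually_nhds (hcont j))
  have hΦjT : Tendsto (fun a => Φ j (T a)) l (𝓝 (Φ j t₀)) := ((hcont j).tendsto t₀).comp hT
  filter_upwards [hposj, hT₀, hΦT.eventually_lt hΦjT (hΦ hj ht₀ hpos₀)] with a ha hTa hlta
  exact hΦ.lt_of_apply_lt hTa ha hlta

theorem tendsto_param [TopologicalSpace ι] [OrderTopology ι]
    (hpos : ∀ᶠ a in l, PositiveUpTo (Φ (θ a)) (T a)) : Tendsto θ l (𝓝 i₀) :=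
  tendsto_order.2
    ⟨fun _ => hΦ.eventually_lt_param hcont ht₀ hpos₀ hT hΦT hT₀ hpos,
      fun _ => hΦ.eventually_param_lt hcont ht₀ hpos₀ hT hΦT hT₀⟩

end Param

end OrderedWhilePositive

end OrderedCurves

section ConservativeSystems

/-- `(q, p)` solves the conservative system `q̇ = p`, `ṗ = -V' q`. The system (HS) is the case
`V' = g'`. -/
structure IsConservativeSol (V' q p : ℝ → ℝ) : Prop where
  hasDerivAt_position : ∀ t, HasDerivAt q (p t) t
  hasDerivAt_momentum : ∀ t, HasDerivAt p (-V' (q t)) t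

/-- The energy of a unit mass at position `q` with momentum `p` in the potential `V`. -/
noncomputable def energy (V : ℝ → ℝ) (q p : ℝ) : ℝ := p ^ 2 / 2 + V q

namespace IsConservativeSol

variable {V V' q p q₁ p₁ q₂ p₂ : ℝ → ℝ} {t : ℝ}

theorem continuous_position (h : IsConservativeSol V' q p) : Continuous q :=
  continuous_iff_continuousAt.2 fun t => (h.hasDerivAt_position t).continuousAt

theorem continuous_momentum (h : IsConservativeSol V' q p) : Continuous p :=
  continuous_iff_continuousAt.2 fun t => (h.hasDerivAt_momentum t).continuousAt

theorem energy_eq (hV : ∀ x, HasDerivAt V (V' x) x) (h : IsConservativeSol V' q p) (s t : ℝ) :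
    energy V (q s) (p s) = energy V (q t) (p t) := by
  have hderiv : ∀ s, HasDerivAt (fun s => energy V (q s) (p s)) 0 s := fun s => by
    refine ((((h.hasDerivAt_momentum s).pow 2).div_const 2).add
      ((hV (q s)).comp s (h.hasDerivAt_position s))).congr_deriv ?_
    push_cast
    ring
  exact is_const_of_deriv_eq_zero (fun s => (hderiv s).differentiableAt)
    (fun s => (hderiv s).deriv) s t

theorem momentum_pos (hV : ∀ x, HasDerivAt V (V' x) x) (h : IsConservativeSol V' q p)
    (henergy : ∀ x, V x < energy V (q 0) (p 0)) (hp : 0 < p 0) (t : ℝ) : 0 < p t := by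
  by_contra! hpt
  obtain ⟨s, hs⟩ := mem_range_of_exists_le_of_exists_ge h.continuous_momentum ⟨t, hpt⟩ ⟨0, hp.le⟩
  have hs_energy := h.energy_eq hV s 0
  simp only [energy, hs] at hs_energy henergy
  linarith [henergy (q s)]

theorem position_lt_of_energy_lt (hV : ∀ x, HasDerivAt V (V' x) x)
    (h₁ : IsConservativeSol V' q₁ p₁) (h₂ : IsConservativeSol V' q₂ p₂)
    (hp₂ : ∀ s, 0 < p₂ s) (henergy : energy V (q₁ 0) (p₁ 0) < energy V (q₂ 0) (p₂ 0))
    (hq : q₁ 0 < q₂ 0) (ht : 0 ≤ t) : q₁ t < q₂ t := by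
  refine lt_of_hasDerivAt_lt_of_eq h₁.hasDerivAt_position h₂.hasDerivAt_position ht hq
    fun s _ hs => ?_
  rw [h₁.energy_eq hV 0 s, h₂.energy_eq hV 0 s, energy, energy, hs] at henergy
  exact lt_of_pow_lt_pow_left₀ 2 (hp₂ s).le (by linarith)

theorem position_eq_of_free {a : ℝ} (h : IsConservativeSol V' q p)
    (hV' : ∀ x, a ≤ x → V' x = 0) (hq : a ≤ q 0) (hp : ∀ s, 0 ≤ p s) (ht : 0 ≤ t) :
    q t = q 0 + t * p 0 := by
  have hq_mono : Monotone q := monotone_of_hasDerivAt_nonneg h.hasDerivAt_position hp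
  have hp_const : ∀ s ∈ Icc 0 t, p s = p 0 :=
    constant_of_has_deriv_right_zero h.continuous_momentum.continuousOn fun s hs => by
      simpa only [hV' _ (hq.trans (hq_mono hs.1)), neg_zero] using
        (h.hasDerivAt_momentum s).hasDerivWithinAt
  refine eq_of_has_deriv_right_eq (f' := p) (g := fun s => q 0 + s * p 0)
    (fun s _ => (h.hasDerivAt_position s).hasDerivWithinAt) (fun s hs => ?_)
    h.continuous_position.continuousOn (by fun_prop) (by simp) t (right_mem_Icc.2 ht)
  rw [hp_const s (Ico_subset_Icc_self hs)]
  simpa using (((hasDerivAt_id s).mul_const (p 0)).const_add (q 0)).hasDerivWithinAt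

section Sturm

variable (hV' : ∀ ⦃a b⦄, 0 ≤ a → a ≤ b → a * V' b ≤ b * V' a)
  (h₁ : IsConservativeSol V' q₁ p₁) (h₂ : IsConservativeSol V' q₂ p₂)
  (hq₁ : q₁ 0 = 0) (hq₂ : q₂ 0 = 0)
include hV' h₁ h₂ hq₁ hq₂

theorem wronskian_nonneg (hpos : ∀ s ∈ Ioo 0 t, 0 ≤ q₁ s) (hle : ∀ s ∈ Ioo 0 t, q₁ s ≤ q₂ s)
    {s : ℝ} (hs : s ∈ Icc 0 t) : 0 ≤ p₂ s * q₁ s - q₂ s * p₁ s := by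
  have hderiv : ∀ s, HasDerivAt (fun s => p₂ s * q₁ s - q₂ s * p₁ s)
      (q₂ s * V' (q₁ s) - q₁ s * V' (q₂ s)) s := fun s => by
    refine (((h₂.hasDerivAt_momentum s).mul (h₁.hasDerivAt_position s)).sub
      ((h₂.hasDerivAt_position s).mul (h₁.hasDerivAt_momentum s))).congr_deriv ?_
    ring
  have hmono : MonotoneOn (fun s => p₂ s * q₁ s - q₂ s * p₁ s) (Icc 0 t) := by
    refine monotoneOn_of_hasDerivWithinAt_nonneg (convex_Icc 0 t)
      (fun s _ => (hderiv s).continuousAt.continuousWithinAt)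
      (fun s _ => (hderiv s).hasDerivWithinAt) fun s hs => ?_
    rw [interior_Icc] at hs
    exact sub_nonneg.2 (hV' (hpos s hs) (hle s hs))
  simpa [hq₁, hq₂] using hmono (left_mem_Icc.2 (hs.1.trans hs.2)) hs hs.1

theorem monotoneOn_position_div (hpos : ∀ s ∈ Ioc 0 t, 0 < q₁ s)
    (hle : ∀ s ∈ Ioo 0 t, q₁ s ≤ q₂ s) : MonotoneOn (fun s => q₂ s / q₁ s) (Ioc 0 t) := by
  have hderiv : ∀ s ∈ Ioc 0 t, HasDerivAt (fun s => q₂ s / q₁ s)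
      ((p₂ s * q₁ s - q₂ s * p₁ s) / q₁ s ^ 2) s := fun s hs =>
    (h₂.hasDerivAt_position s).div (h₁.hasDerivAt_position s) (hpos s hs).ne'
  refine monotoneOn_of_hasDerivWithinAt_nonneg (convex_Ioc 0 t)
    (fun s hs => (hderiv s hs).continuousAt.continuousWithinAt)
    (fun s hs => (hderiv s (interior_subset hs)).hasDerivWithinAt) fun s hs => ?_
  have hW := wronskian_nonneg hV' h₁ h₂ hq₁ hq₂ (fun s hs => (hpos s (Ioo_subset_Ioc_self hs)).le)
    hle (Ioc_subset_Icc_self (interior_subset hs))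
  positivity

theorem position_lt_of_momentum_lt (hp : p₁ 0 < p₂ 0) (ht : 0 < t)
    (hpos : ∀ s ∈ Ioc 0 t, 0 < q₁ s) : q₁ t < q₂ t := by
  by_contra! hle
  obtain ⟨τ, hτ, hmeet, hlt⟩ := exists_first_zero (f := fun s => q₂ s - q₁ s)
    (h₂.continuous_position.sub h₁.continuous_position).continuousOn ht
    (eventually_nhdsGT_pos_of_hasDerivAt
      ((h₂.hasDerivAt_position 0).sub (h₁.hasDerivAt_position 0)) (by simp [hq₁, hq₂])
      (sub_pos.2 hp))
    (sub_nonpos.2 hle)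
  have hpos' : ∀ s ∈ Ioc 0 τ, 0 < q₁ s := fun s hs => hpos s ⟨hs.1, hs.2.trans hτ.2⟩
  obtain ⟨s, hs⟩ : (Ioo 0 τ).Nonempty := nonempty_Ioo.2 hτ.1
  have hratio : 1 < q₂ τ / q₁ τ := calc
    1 < q₂ s / q₁ s := (one_lt_div (hpos' s (Ioo_subset_Ioc_self hs))).2 (sub_pos.1 (hlt s hs))
    _ ≤ q₂ τ / q₁ τ := monotoneOn_position_div hV' h₁ h₂ hq₁ hq₂ hpos'
      (fun s hs => (sub_pos.1 (hlt s hs)).le) (Ioo_subset_Ioc_self hs) (right_mem_Ioc.2 hτ.1)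
      hs.2.le
  rw [sub_eq_zero.1 hmeet, div_self (hpos τ hτ).ne'] at hratio
  exact hratio.false

end Sturm

end IsConservativeSol

theorem IsHSSol.isConservativeSol {q p : ℝ → ℝ} (h : IsHSSol q p) : IsConservativeSol g' q p :=
  ⟨h.1, h.2⟩

end ConservativeSystems

section Potential

theorem g_eq_one_sub_max (x : ℝ) : g x = 1 - max (1 - x ^ 2) 0 ^ 4 := by
  simp only [g, ← sq_le_one_iff_abs_le_one]
  split_ifs with h
  · rw [max_eq_left (sub_nonneg.2 h)]
  · rw [max_eq_right (by linarith)]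
    norm_num

theorem g'_eq_mul_max (x : ℝ) : g' x = 8 * x * max (1 - x ^ 2) 0 ^ 3 := by
  simp only [g', ← sq_le_one_iff_abs_le_one]
  split_ifs with h
  · rw [max_eq_left (sub_nonneg.2 h)]
  · rw [max_eq_right (by linarith)]
    norm_num

theorem hasDerivAt_g (x : ℝ) : HasDerivAt g (g' x) x := by
  have hsq : HasDerivAt (fun x : ℝ => 1 - x ^ 2) (-(2 * x)) x := by
    simpa using (hasDerivAt_pow 2 x).const_sub 1
  rw [funext g_eq_one_sub_max, g'_eq_mul_max]
  refine (((hasDerivAt_max_zero_pow 2 (1 - x ^ 2)).comp x hsq).const_sub 1).congr_deriv ?_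
  push_cast
  ring

theorem g_zero : g 0 = 0 := by
  norm_num [g]

theorem g_le_one (x : ℝ) : g x ≤ 1 := by
  rw [g_eq_one_sub_max, sub_le_self_iff]
  positivity

theorem monotoneOn_g : MonotoneOn g (Ici 0) := by
  intro a (ha : 0 ≤ a) b _ hab
  simp only [g_eq_one_sub_max]
  gcongr

theorem g_lt_g {a b : ℝ} (ha : 0 ≤ a) (ha₁ : a < 1) (hab : a < b) : g a < g b := by
  have hpos : 0 < 1 - a ^ 2 := sub_pos.2 (pow_lt_one₀ ha ha₁ two_ne_zero)
  have hmax : max (1 - b ^ 2) 0 < max (1 - a ^ 2) 0 := by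
    rw [max_eq_left hpos.le]
    exact max_lt (by gcongr) hpos
  simp only [g_eq_one_sub_max]
  gcongr

theorem g'_of_one_le {x : ℝ} (hx : 1 ≤ x) : g' x = 0 := by
  rw [g'_eq_mul_max, max_eq_right (sub_nonpos.2 (one_le_pow₀ hx))]
  norm_num

theorem mul_g'_le_mul_g' ⦃a b : ℝ⦄ (ha : 0 ≤ a) (hab : a ≤ b) : a * g' b ≤ b * g' a := by
  have hb : 0 ≤ b := ha.trans hab
  have hmax : max (1 - b ^ 2) 0 ^ 3 ≤ max (1 - a ^ 2) 0 ^ 3 := by gcongr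
  calc a * g' b = 8 * (a * b) * max (1 - b ^ 2) 0 ^ 3 := by rw [g'_eq_mul_max]; ring
    _ ≤ 8 * (a * b) * max (1 - a ^ 2) 0 ^ 3 := by gcongr
    _ = b * g' a := by rw [g'_eq_mul_max]; ring

end Potential

section InitialData

/-- The parametrisation of `Dset` by `θ > -2`: the segment `{0} × (0, 2]` for `θ ≤ 0`, then the
half-line `[0, ∞) × {2}`. -/
def initialDatum (θ : Ioi (-2 : ℝ)) : ℝ × ℝ := (max (θ : ℝ) 0, 2 + min (θ : ℝ) 0)

theorem continuous_initialDatum : Continuous initialDatum := by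
  unfold initialDatum
  fun_prop

theorem Dset_subset_range_initialDatum : Dset ⊆ range initialDatum := by
  rintro ⟨q, p⟩ (⟨hq : 0 ≤ q, rfl : p = 2⟩ | ⟨rfl : q = 0, hp₀ : 0 < p, hp₂ : p ≤ 2⟩)
  · exact ⟨⟨q, show -2 < q by linarith⟩, by simp [initialDatum, hq]⟩
  · exact ⟨⟨p - 2, show -2 < p - 2 by linarith⟩, by simp [initialDatum, hp₂]⟩

theorem initialDatum_of_nonneg {θ : Ioi (-2 : ℝ)} (hθ : 0 ≤ (θ : ℝ)) :
    initialDatum θ = (↑θ, 2) := by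
  simp [initialDatum, hθ]

theorem initialDatum_of_nonpos {θ : Ioi (-2 : ℝ)} (hθ : (θ : ℝ) ≤ 0) :
    initialDatum θ = (0, 2 + (θ : ℝ)) := by
  simp [initialDatum, hθ]

theorem energy_initialDatum_lt {θ₁ θ₂ : Ioi (-2 : ℝ)} (hlt : θ₁ < θ₂) (hθ₁ : (θ₁ : ℝ) < 1) :
    energy g (initialDatum θ₁).1 (initialDatum θ₁).2 <
      energy g (initialDatum θ₂).1 (initialDatum θ₂).2 := by
  have hlt' : (θ₁ : ℝ) < θ₂ := hlt
  unfold energy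
  rcases lt_or_ge (θ₁ : ℝ) 0 with hneg | hnonneg
  · have hg : g 0 ≤ g (max θ₂ 0) :=
      monotoneOn_g self_mem_Ici (mem_Ici.2 (le_max_right _ _)) (le_max_right _ _)
    have hp : 2 + (θ₁ : ℝ) < 2 + min (θ₂ : ℝ) 0 := by linarith [lt_min hlt' hneg]
    have hp_pos : 0 ≤ 2 + (θ₁ : ℝ) := by linarith [mem_Ioi.1 θ₁.2]
    rw [initialDatum_of_nonpos hneg.le]
    exact add_lt_add_of_lt_of_le (by simp only [initialDatum]; gcongr) hg
  · rw [initialDatum_of_nonneg hnonneg, initialDatum_of_nonneg (hnonneg.trans hlt'.le)]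
    gcongr
    exact g_lt_g hnonneg hθ₁ hlt'

end InitialData

section Orbits

variable {F : ℝ → ℝ → ℝ → ℝ × ℝ}

/-- The orbit under `F` of the datum with parameter `θ`. -/
def orbit (F : ℝ → ℝ → ℝ → ℝ × ℝ) (θ : Ioi (-2 : ℝ)) (t : ℝ) : ℝ × ℝ :=
  F t (initialDatum θ).1 (initialDatum θ).2

namespace IsHSFlow

variable (hF : IsHSFlow F) {θ θ₁ θ₂ : Ioi (-2 : ℝ)} {t : ℝ}
include hF

theorem orbit_zero (θ : Ioi (-2 : ℝ)) : orbit F θ 0 = initialDatum θ :=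
  (hF _ _).2

theorem isConservativeSol_orbit (θ : Ioi (-2 : ℝ)) :
    IsConservativeSol g' (fun t => (orbit F θ t).1) (fun t => (orbit F θ t).2) :=
  (hF _ _).1.isConservativeSol

theorem momentum_pos_of_nonneg (hθ : 0 ≤ (θ : ℝ)) (t : ℝ) : 0 < (orbit F θ t).2 := by
  refine (hF.isConservativeSol_orbit θ).momentum_pos hasDerivAt_g (fun x => ?_) ?_ t
  · have hgθ : g 0 ≤ g θ := monotoneOn_g self_mem_Ici hθ hθ
    rw [hF.orbit_zero, initialDatum_of_nonneg hθ, energy]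
    linarith [g_le_one x, g_zero]
  · rw [hF.orbit_zero, initialDatum_of_nonneg hθ]
    exact two_pos

theorem position_of_one_le (hθ : 1 ≤ (θ : ℝ)) (ht : 0 ≤ t) : (orbit F θ t).1 = θ + t * 2 := by
  have hθ₀ : 0 ≤ (θ : ℝ) := zero_le_one.trans hθ
  have hdatum : orbit F θ 0 = (↑θ, 2) := (hF.orbit_zero θ).trans (initialDatum_of_nonneg hθ₀)
  simpa only [hdatum] using (hF.isConservativeSol_orbit θ).position_eq_of_free
    (fun _ => g'_of_one_le) (by rwa [hdatum]) (fun s => (hF.momentum_pos_of_nonneg hθ₀ s).le) ht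

theorem position_lt_of_nonpos (hlt : θ₁ < θ₂) (hθ₂ : (θ₂ : ℝ) ≤ 0) (ht : 0 < t)
    (hpos : PositiveUpTo (fun s => (orbit F θ₁ s).1) t) : (orbit F θ₁ t).1 < (orbit F θ₂ t).1 := by
  have hlt' : (θ₁ : ℝ) < θ₂ := hlt
  have hdatum₁ : orbit F θ₁ 0 = (0, 2 + (θ₁ : ℝ)) :=
    (hF.orbit_zero θ₁).trans (initialDatum_of_nonpos (hlt'.le.trans hθ₂))
  have hdatum₂ : orbit F θ₂ 0 = (0, 2 + (θ₂ : ℝ)) :=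
    (hF.orbit_zero θ₂).trans (initialDatum_of_nonpos hθ₂)
  refine IsConservativeSol.position_lt_of_momentum_lt mul_g'_le_mul_g'
    (hF.isConservativeSol_orbit θ₁) (hF.isConservativeSol_orbit θ₂) (by rw [hdatum₁])
    (by rw [hdatum₂]) (by rw [hdatum₁, hdatum₂]; simpa) ht fun s hs => ?_
  rcases hs.2.eq_or_lt with rfl | hst
  · exact hpos.2
  · exact hpos.1 s ⟨hs.1, hst⟩

theorem position_lt_of_pos (hlt : θ₁ < θ₂) (hθ₂ : 0 < (θ₂ : ℝ)) (ht : 0 ≤ t) :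
    (orbit F θ₁ t).1 < (orbit F θ₂ t).1 := by
  have hlt' : (θ₁ : ℝ) < θ₂ := hlt
  rcases lt_or_ge (θ₁ : ℝ) 1 with hθ₁ | hθ₁
  · refine (hF.isConservativeSol_orbit θ₁).position_lt_of_energy_lt hasDerivAt_g
      (hF.isConservativeSol_orbit θ₂) (hF.momentum_pos_of_nonneg hθ₂.le) ?_ ?_ ht
    · simpa only [hF.orbit_zero] using energy_initialDatum_lt hlt hθ₁
    · rw [hF.orbit_zero, hF.orbit_zero, initialDatum_of_nonneg hθ₂.le]
      exact max_lt hlt' hθ₂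
  · rw [hF.position_of_one_le hθ₁ ht, hF.position_of_one_le (hθ₁.trans hlt'.le) ht]
    gcongr

theorem orderedWhilePositive_orbit : OrderedWhilePositive fun θ t => (orbit F θ t).1 := by
  intro θ₁ θ₂ t hlt ht hpos
  rcases lt_or_ge 0 (θ₂ : ℝ) with hθ₂ | hθ₂
  · exact hF.position_lt_of_pos hlt hθ₂ ht
  · refine hF.position_lt_of_nonpos hlt hθ₂ (ht.lt_of_ne ?_) hpos
    rintro rfl
    have hθ₁ : (θ₁ : ℝ) ≤ 0 := (show (θ₁ : ℝ) ≤ θ₂ from hlt.le).trans hθ₂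
    simpa [hF.orbit_zero, initialDatum_of_nonpos hθ₁] using hpos.2

end IsHSFlow

end Orbits

namespace IsDeltaMap

variable {F : ℝ → ℝ → ℝ → ℝ × ℝ} {Δ : ℝ → ℝ → ℝ × ℝ} (hΔ : IsDeltaMap F Δ)
include hΔ

theorem exists_param {t x : ℝ} (ht : 0 < t) (hx : 0 < x) :
    ∃ θ, initialDatum θ = Δ t x ∧ (orbit F θ t).1 = x ∧
      PositiveUpTo (fun s => (orbit F θ s).1) t := by
  obtain ⟨hmem, hreach, hpos⟩ := hΔ t x ht hx
  obtain ⟨θ, hθ⟩ := Dset_subset_range_initialDatum hmem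
  rw [← hθ] at hreach hpos
  exact ⟨θ, hθ, hreach, hpos, hx.trans_eq hreach.symm⟩

theorem momentum_lt (hF : IsHSFlow F) {t x x' p p' : ℝ} (ht : 0 < t) (hx : 0 < x) (hlt : x < x')
    (hp : Δ t x = (0, p)) (hp' : Δ t x' = (0, p')) : p < p' := by
  obtain ⟨θ, hθ, hreach, -⟩ := hΔ.exists_param ht hx
  obtain ⟨θ', hθ', hreach', hpos'⟩ := hΔ.exists_param ht (hx.trans hlt)
  have hparam : (θ : ℝ) < θ' := hF.orderedWhilePositive_orbit.lt_of_apply_lt ht.le hpos'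
    (by rwa [hreach, hreach'])
  simp only [hp, hp', initialDatum, Prod.mk.injEq, max_eq_right_iff] at hθ hθ'
  rw [← hθ.2, ← hθ'.2, min_eq_left hθ.1, min_eq_left hθ'.1]
  gcongr

theorem tendsto_initialDatum (hF : IsHSFlow F) {α : Type*} {l : Filter α} {T X : α → ℝ}
    {θ₀ : Ioi (-2 : ℝ)} {t₀ : ℝ} (ht₀ : 0 ≤ t₀)
    (hpos₀ : PositiveUpTo (fun s => (orbit F θ₀ s).1) t₀) (hT : Tendsto T l (𝓝 t₀))
    (hX : Tendsto X l (𝓝 (orbit F θ₀ t₀).1)) (hTpos : ∀ᶠ a in l, 0 < T a) :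
    Tendsto (fun a => Δ (T a) (X a)) l (𝓝 (initialDatum θ₀)) := by
  have hdomain : ∀ᶠ a in l, 0 < T a ∧ 0 < X a := hTpos.and (hX.eventually_const_lt hpos₀.2)
  choose! θ hθ hreach hpos using fun a (ha : 0 < T a ∧ 0 < X a) => hΔ.exists_param ha.1 ha.2
  have hparam : Tendsto θ l (𝓝 θ₀) := hF.orderedWhilePositive_orbit.tendsto_param
    (fun i => (hF.isConservativeSol_orbit i).continuous_position) ht₀ hpos₀ hT
    (hX.congr' (hdomain.mono fun a ha => (hreach a ha).symm)) (hTpos.mono fun _ => le_of_lt)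
    (hdomain.mono hpos)
  exact ((continuous_initialDatum.tendsto θ₀).comp hparam).congr' (hdomain.mono hθ)

theorem continuousOn (hF : IsHSFlow F) :
    ContinuousOn (fun z : ℝ × ℝ => Δ z.1 z.2) (Ioi 0 ×ˢ Ioi 0) := by
  rintro ⟨t₀, x₀⟩ ⟨ht₀ : 0 < t₀, hx₀ : 0 < x₀⟩
  obtain ⟨θ₀, hθ₀, hreach, hpos⟩ := hΔ.exists_param ht₀ hx₀
  rw [ContinuousWithinAt, ← hθ₀]
  refine hΔ.tendsto_initialDatum hF ht₀.le hpos
    (continuous_fst.continuousWithinAt.tendsto) ?_ (eventually_mem_nhdsWithin.mono fun z hz => hz.1)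
  rw [hreach]
  exact continuous_snd.continuousWithinAt.tendsto

theorem tendsto_nhdsGT_zero (hF : IsHSFlow F) {x : ℝ} (hx : 0 < x) :
    Tendsto (fun t => Δ t x) (𝓝[>] 0) (𝓝 (x, 2)) := by
  let θ : Ioi (-2 : ℝ) := ⟨x, show -2 < x by linarith⟩
  have hdatum : initialDatum θ = (x, 2) := initialDatum_of_nonneg (θ := θ) hx.le
  have hstart : orbit F θ 0 = (x, 2) := (hF.orbit_zero θ).trans hdatum
  rw [← hdatum]
  refine hΔ.tendsto_initialDatum hF le_rfl ⟨by simp, by simpa only [hstart]⟩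
    (tendsto_id.mono_left nhdsWithin_le_nhds) ?_ self_mem_nhdsWithin
  rw [hstart]
  exact tendsto_const_nhds

end IsDeltaMap

/-- Lemma ce5, properties of `Δ`: (i) `Δ` is continuous on `(0,∞)²`; (ii) `Δ` is monotone:
if `Δ(t₀,x₀) = (0,p₀)`, `Δ(t₀,x₀') = (0,p₀')` and `0 < x₀ < x₀'` then `p₀ < p₀'`;
(iii) for every `x > 0`, `Δ(t,x) → (x,2)` as `t → 0⁺`. -/
theorem stmt_9 (F : ℝ → ℝ → ℝ → ℝ × ℝ) (hF : IsHSFlow F)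
    (Δ : ℝ → ℝ → ℝ × ℝ) (hΔ : IsDeltaMap F Δ) :
    ContinuousOn (fun z : ℝ × ℝ => Δ z.1 z.2) (Ioi 0 ×ˢ Ioi 0) ∧
    (∀ t₀ x₀ x₀' p₀ p₀' : ℝ, 0 < t₀ → 0 < x₀ → x₀ < x₀' →
      Δ t₀ x₀ = (0, p₀) → Δ t₀ x₀' = (0, p₀') → p₀ < p₀') ∧
    (∀ x : ℝ, 0 < x →
      Tendsto (fun t => Δ t x) (𝓝[>] 0) (𝓝 (x, 2))) := by
  exact ⟨hΔ.continuousOn hF,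
    fun _ _ _ _ _ ht hx hlt hp hp' => hΔ.momentum_lt hF ht hx hlt hp hp',
    fun _ hx => hΔ.tendsto_nhdsGT_zero hF hx⟩
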